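/- Exact expectation of the spectral covariance entries (exact form of the expectation part of Lemma 2). Let K ≥ 1 be an integer and N_w, N_s, δ_p, α_w, α_p, α_s real numbers. On a probability space let m_τ(k), m_u(k) for k ∈ {-K, …, K} be integrable real random variables with integrable products, and set μ_τ = (1/(2K+1)) Σ_k m_τ(k), μ_u = (1/(2K+1)) Σ_k m_u(k), and c_{τu} = (1/(2K)) Σ_k (m_τ(k) − μ_τ)(m_u(k) − μ_u). Assume: E[m_τ(k) m_u(k)] = N_w²(1+α_w) for each k < 0; E[m_τ(0) m_u(0)] = N_w²(1+α_w) + 2 N_w δ_p + α_p δ_p²; E[m_τ(k) m_u(k)] = N_w²(1+α_w) + 2 N_w N_s + 2 N_s (N_s + N_w) α_s for each k > 0; and E[μ_τ μ_u] = N_w² + N_w δ_p / K + α_p δ_p² / (4K²). Then E[c_{τu}] = ((2K+1)/(2K)) α_w N_w² + α_p δ_p² / (2K) − (2K+1) α_p δ_p² / (8K³) + N_s (N_w + (N_s + N_w) α_s) − N_w δ_p / (2K²). -/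

import Mathlib

open MeasureTheory ProbabilityTheory

/-!
For a sample of size `n`, `∑ (f - f̄) (g - ḡ) = ∑ f g - n f̄ ḡ`. Hence the expectation of a sample
covariance depends only on the diagonal moments and on the joint moment of the two sample means.
Over the symmetric band `[-K, K]` the diagonal moments take one value on the `K` noise bins `k < 0`,
one at the pilot bin `k = 0`, and one on the `K` signal bins `0 < k`.
-/

open Finset
open scoped BigOperators

section SampleCovariance

/-- The unbiased sample covariance of two families `f` and `g` indexed by a finite set `s`, with
normalization `1 / (#s - 1)`, so zero when `s` has one element. No complex conjugate is taken.
On the band `s = Icc (-K) K` it is the spectral covariance `c_{τu}` of the spectrogram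
columns `f = m_τ` and `g = m_u`. -/
def sampleCov {ι 𝕜 : Type*} [Field 𝕜] [CharZero 𝕜] (s : Finset ι) (f g : ι → 𝕜) : 𝕜 :=
  (#s - 1 : 𝕜)⁻¹ * ∑ i ∈ s, (f i - 𝔼 j ∈ s, f j) * (g i - 𝔼 j ∈ s, g j)

theorem sum_sub_expect_mul_sub_expect {ι R : Type*} [Ring R] [Module ℚ≥0 R]
    (s : Finset ι) (f g : ι → R) :
    ∑ i ∈ s, (f i - 𝔼 j ∈ s, f j) * (g i - 𝔼 j ∈ s, g j) =
      ∑ i ∈ s, f i * g i - #s * ((𝔼 i ∈ s, f i) * 𝔼 i ∈ s, g i) := by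
  simp only [sub_mul, mul_sub, sum_sub_distrib, ← sum_mul, ← mul_sum, sum_const]
  rw [← card_smul_expect s f, ← card_smul_expect s g, smul_mul_assoc, mul_smul_comm,
    ← nsmul_eq_mul]
  abel

variable {ι Ω 𝕜 : Type*} [MeasurableSpace Ω] {μ : Measure Ω} [RCLike 𝕜] {X : ι → Ω → 𝕜}

theorem integrable_expect_mul_expect {κ : Type*} {Y : κ → Ω → 𝕜} {s : Finset ι} {t : Finset κ}
    (h : ∀ i ∈ s, ∀ j ∈ t, Integrable (fun ω => X i ω * Y j ω) μ) :
    Integrable (fun ω => (𝔼 i ∈ s, X i ω) * 𝔼 j ∈ t, Y j ω) μ := by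
  simp_rw [expect_mul_expect, expect_eq_sum_div_card]
  exact (integrable_finsetSum s fun i hi =>
    (integrable_finsetSum t fun j hj => h i hi j hj).div_const _).div_const _

theorem integral_sampleCov {Y : ι → Ω → 𝕜} {s : Finset ι}
    (h : ∀ i ∈ s, ∀ j ∈ s, Integrable (fun ω => X i ω * Y j ω) μ) :
    ∫ ω, sampleCov s (X · ω) (Y · ω) ∂μ =
      (#s - 1 : 𝕜)⁻¹ * (∑ i ∈ s, ∫ ω, X i ω * Y i ω ∂μ -
        #s * ∫ ω, (𝔼 i ∈ s, X i ω) * 𝔼 i ∈ s, Y i ω ∂μ) := by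
  have h_diag : ∀ i ∈ s, Integrable (fun ω => X i ω * Y i ω) μ := fun i hi => h i hi i hi
  simp only [sampleCov, sum_sub_expect_mul_sub_expect]
  rw [integral_const_mul, integral_sub (integrable_finsetSum s h_diag)
    ((integrable_expect_mul_expect h).const_mul _), integral_finsetSum s h_diag,
    integral_const_mul]

end SampleCovariance

section SymmetricBand

theorem sum_Ico_add_add_sum_Ioc {α M : Type*} [LinearOrder α] [LocallyFiniteOrder α]
    [AddCommMonoid M] {a b c : α} (hab : a ≤ b) (hbc : b ≤ c) (f : α → M) :
    ∑ i ∈ Ico a b, f i + f b + ∑ i ∈ Ioc b c, f i = ∑ i ∈ Icc a c, f i := by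
  have h_disj : Disjoint (Ico a b) (Icc b c) :=
    disjoint_left.2 fun _ hi hj => (mem_Ico.1 hi).2.not_ge (mem_Icc.1 hj).1
  have h_union : Ico a b ∪ Icc b c = Icc a c :=
    coe_injective <| by simpa only [coe_union, coe_Ico, coe_Icc] using
      Set.Ico_union_Icc_eq_Icc hab hbc
  rw [add_assoc, add_sum_Ioc_eq_sum_Icc hbc, ← sum_union h_disj, h_union]

variable {K : ℤ}

theorem sum_Icc_neg_self_of_const_on_signs {M : Type*} [AddCommMonoid M] {f : ℤ → M} {a b c : M}
    (hK : 0 ≤ K) (hneg : ∀ k ∈ Icc (-K) K, k < 0 → f k = a) (hzero : f 0 = b)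
    (hpos : ∀ k ∈ Icc (-K) K, 0 < k → f k = c) :
    ∑ k ∈ Icc (-K) K, f k = K.toNat • a + b + K.toNat • c := by
  have h_left : ∑ k ∈ Ico (-K) 0, f k = K.toNat • a := by
    rw [sum_eq_card_nsmul fun k hk => ?_, Int.card_Ico, zero_sub, neg_neg]
    rw [mem_Ico] at hk
    exact hneg k (mem_Icc.2 ⟨hk.1, by lia⟩) hk.2
  have h_right : ∑ k ∈ Ioc 0 K, f k = K.toNat • c := by
    rw [sum_eq_card_nsmul fun k hk => ?_, Int.card_Ioc, sub_zero]
    rw [mem_Ioc] at hk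
    exact hpos k (mem_Icc.2 ⟨by lia, hk.2⟩) hk.1
  rw [← sum_Ico_add_add_sum_Ioc (neg_nonpos.2 hK) hK, h_left, hzero, h_right]

variable {𝕜 : Type*}

theorem cast_card_Icc_neg_self [Ring 𝕜] (hK : 0 ≤ K) : (#(Icc (-K) K) : 𝕜) = 2 * K + 1 := by
  have h : (#(Icc (-K) K) : ℤ) = 2 * K + 1 := by
    rw [Int.card_Icc]
    lia
  exact_mod_cast congrArg (Int.cast : ℤ → 𝕜) h

variable [Field 𝕜] [CharZero 𝕜]

theorem expect_Icc_neg_self (hK : 0 ≤ K) (f : ℤ → 𝕜) :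
    𝔼 k ∈ Icc (-K) K, f k = 1 / (2 * (K : 𝕜) + 1) * ∑ k ∈ Icc (-K) K, f k := by
  rw [expect_eq_sum_div_card, cast_card_Icc_neg_self hK, div_eq_mul_one_div, mul_comm]

theorem sampleCov_Icc_neg_self (hK : 0 ≤ K) (f g : ℤ → 𝕜) :
    sampleCov (Icc (-K) K) f g = 1 / (2 * (K : 𝕜)) * ∑ k ∈ Icc (-K) K,
      (f k - 1 / (2 * (K : 𝕜) + 1) * ∑ j ∈ Icc (-K) K, f j) *
        (g k - 1 / (2 * (K : 𝕜) + 1) * ∑ j ∈ Icc (-K) K, g j) := by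
  simp only [sampleCov, expect_Icc_neg_self hK, cast_card_Icc_neg_self hK, add_sub_cancel_right,
    one_div]

end SymmetricBand

theorem expectation_spectral_covariance_entry_general {Ω : Type*} [MeasurableSpace Ω]
    {μ : Measure Ω} {K : ℤ} (hK : 1 ≤ K) {Nw Ns δp αw αp αs : ℝ} {mτ mu : ℤ → Ω → ℝ}
    (hintp : ∀ k ∈ Icc (-K) K, ∀ j ∈ Icc (-K) K, Integrable (fun ω => mτ k ω * mu j ω) μ)
    (hneg : ∀ k ∈ Icc (-K) K, k < 0 → ∫ ω, mτ k ω * mu k ω ∂μ = Nw ^ 2 * (1 + αw))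
    (hzero : ∫ ω, mτ 0 ω * mu 0 ω ∂μ = Nw ^ 2 * (1 + αw) + 2 * Nw * δp + αp * δp ^ 2)
    (hpos : ∀ k ∈ Icc (-K) K, 0 < k →
      ∫ ω, mτ k ω * mu k ω ∂μ = Nw ^ 2 * (1 + αw) + 2 * Nw * Ns + 2 * Ns * (Ns + Nw) * αs)
    (hμμ : ∫ ω, (𝔼 k ∈ Icc (-K) K, mτ k ω) * 𝔼 k ∈ Icc (-K) K, mu k ω ∂μ =
      Nw ^ 2 + Nw * δp / K + αp * δp ^ 2 / (4 * K ^ 2)) :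
    ∫ ω, sampleCov (Icc (-K) K) (mτ · ω) (mu · ω) ∂μ =
      (2 * K + 1) / (2 * K) * αw * Nw ^ 2 + αp * δp ^ 2 / (2 * K)
        - (2 * K + 1) * αp * δp ^ 2 / (8 * K ^ 3) + Ns * (Nw + (Ns + Nw) * αs)
        - Nw * δp / (2 * K ^ 2) := by
  have hK₀ : 0 ≤ K := by lia
  have hK_ne : (K : ℝ) ≠ 0 := by exact_mod_cast (by lia : K ≠ 0)
  have hK_cast : (K.toNat : ℝ) = K := by exact_mod_cast Int.toNat_of_nonneg hK₀
  rw [integral_sampleCov hintp, sum_Icc_neg_self_of_const_on_signs hK₀ hneg hzero hpos, hμμ,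
    cast_card_Icc_neg_self hK₀, nsmul_eq_mul, nsmul_eq_mul, hK_cast]
  field_simp
  ring

/-- Exact expectation of the spectral covariance entries (exact form of the
expectation part of Lemma 2). -/
theorem expectation_spectral_covariance_entry {Ω : Type*} [MeasureSpace Ω]
    [IsProbabilityMeasure (ℙ : Measure Ω)]
    (K : ℤ) (hK : 1 ≤ K) (Nw Ns δp αw αp αs : ℝ)
    (mτ mu : ℤ → Ω → ℝ)
    (hintτ : ∀ k ∈ Finset.Icc (-K) K, Integrable (mτ k))
    (hintu : ∀ k ∈ Finset.Icc (-K) K, Integrable (mu k))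
    (hintp : ∀ k ∈ Finset.Icc (-K) K, ∀ j ∈ Finset.Icc (-K) K,
      Integrable (fun ω => mτ k ω * mu j ω))
    (hneg : ∀ k ∈ Finset.Icc (-K) K, k < 0 →
      ∫ ω, mτ k ω * mu k ω = Nw ^ 2 * (1 + αw))
    (hzero : ∫ ω, mτ 0 ω * mu 0 ω
      = Nw ^ 2 * (1 + αw) + 2 * Nw * δp + αp * δp ^ 2)
    (hpos : ∀ k ∈ Finset.Icc (-K) K, 0 < k →
      ∫ ω, mτ k ω * mu k ω
        = Nw ^ 2 * (1 + αw) + 2 * Nw * Ns + 2 * Ns * (Ns + Nw) * αs)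
    (hμμ : ∫ ω, ((1 / (2 * (K : ℝ) + 1)) * ∑ k ∈ Finset.Icc (-K) K, mτ k ω)
              * ((1 / (2 * (K : ℝ) + 1)) * ∑ k ∈ Finset.Icc (-K) K, mu k ω)
        = Nw ^ 2 + Nw * δp / (K : ℝ) + αp * δp ^ 2 / (4 * (K : ℝ) ^ 2)) :
    ∫ ω, (1 / (2 * (K : ℝ))) *
        ∑ k ∈ Finset.Icc (-K) K,
          (mτ k ω - (1 / (2 * (K : ℝ) + 1)) * ∑ j ∈ Finset.Icc (-K) K, mτ j ω) *
            (mu k ω - (1 / (2 * (K : ℝ) + 1)) * ∑ j ∈ Finset.Icc (-K) K, mu j ω)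
      = ((2 * (K : ℝ) + 1) / (2 * (K : ℝ))) * αw * Nw ^ 2
        + αp * δp ^ 2 / (2 * (K : ℝ))
        - (2 * (K : ℝ) + 1) * αp * δp ^ 2 / (8 * (K : ℝ) ^ 3)
        + Ns * (Nw + (Ns + Nw) * αs)
        - Nw * δp / (2 * (K : ℝ) ^ 2) := by
  have hK₀ : 0 ≤ K := zero_le_one.trans hK
  simp only [← expect_Icc_neg_self hK₀] at hμμ
  simpa only [sampleCov_Icc_neg_self hK₀] using
    expectation_spectral_covariance_entry_general hK hintp hneg hzero hpos hμμ
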